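/- arXiv:0902.1545 — 5 statements merged into one kernel-verified Lean document; each statement's English description precedes it below -/
import Mathlib

section
/- Let m ≥ 2 be an integer, let Ω ⊆ ℝ^m be any set, and let 1 ≤ t < s ≤ 2. Then |ℋ^{m−1}(π(cl(Ω) ∩ S_s)) − ℋ^{m−1}(π(cl(Ω) ∩ S_t))| ≤ ℋ^{m−1}(∂Ω ∩ {x ∈ ℝ^m : t ≤ ‖x‖ ≤ s}). -/
open MeasureTheory Set Metric

/-!
A ray from the origin that meets `closure Ω` at one of the two radii but not at the other must cross
the frontier of `closure Ω`, hence `frontier Ω`, at a radius in between, by connectedness of the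
segment (`radial_image_subset`). So the projected slice at either radius is contained in the union
of the projected slice at the other radius and the projection of the frontier in the annulus.
Subadditivity of Hausdorff measure, together with the fact that radial projection is 1-Lipschitz on
`{x | 1 ≤ ‖x‖}` (`lipschitzOnWith_radial`), gives both inequalities.
-/

theorem lipschitzOnWith_radial {E : Type*} [NormedAddCommGroup E] [InnerProductSpace ℝ E] :
    LipschitzOnWith 1 (fun x : E => ‖x‖⁻¹ • x) {x | 1 ≤ ‖x‖} := by
  refine LipschitzOnWith.of_dist_le_mul fun x (hx : 1 ≤ ‖x‖) y (hy : 1 ≤ ‖y‖) => ?_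
  rw [NNReal.coe_one, one_mul, dist_eq_norm, dist_eq_norm]
  refine le_of_sq_le_sq ?_ (norm_nonneg _)
  rw [norm_sub_sq_real, norm_sub_sq_real, norm_smul, norm_smul, real_inner_smul_left,
    real_inner_smul_right, norm_inv, norm_inv, norm_norm, norm_norm,
    inv_mul_cancel₀ (by positivity), inv_mul_cancel₀ (by positivity)]
  have hc := real_inner_le_norm x y
  have hab : ‖x‖⁻¹ * ‖y‖⁻¹ ≤ 1 :=
    mul_le_one₀ (inv_le_one_of_one_le₀ hx) (by positivity) (inv_le_one_of_one_le₀ hy)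
  have hm : ‖x‖⁻¹ * ‖y‖⁻¹ * (‖x‖ * ‖y‖) = 1 := by
    have : ‖x‖ ≠ 0 := by positivity
    have : ‖y‖ ≠ 0 := by positivity
    field_simp
  -- The difference of the squares is
  -- `(‖x‖ - ‖y‖)² + 2 (‖x‖‖y‖ - ⟪x, y⟫) (1 - 1 / (‖x‖‖y‖))`, a sum of nonnegative terms.
  nlinarith [sq_nonneg (‖x‖ - ‖y‖), mul_nonneg (sub_nonneg.2 hc) (sub_nonneg.2 hab)]

/-- The radii `a` and `b` may come in either order, so that the inclusion yields both inequalities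
between the two slices. -/
theorem radial_image_subset {E : Type*} [NormedAddCommGroup E] [NormedSpace ℝ E] (Ω : Set E)
    {t s a b : ℝ} (ht : 0 < t) (ha : a ∈ Icc t s) (hb : b ∈ Icc t s) :
    (fun x : E => ‖x‖⁻¹ • x) '' (closure Ω ∩ {x | ‖x‖ = a}) ⊆
      (fun x : E => ‖x‖⁻¹ • x) '' (closure Ω ∩ {x | ‖x‖ = b}) ∪
        (fun x : E => ‖x‖⁻¹ • x) '' (frontier Ω ∩ {x | t ≤ ‖x‖ ∧ ‖x‖ ≤ s}) := by
  rintro _ ⟨x, ⟨hxΩ, hxa : ‖x‖ = a⟩, rfl⟩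
  have ha0 : 0 < a := ht.trans_le ha.1
  have hx0 : ‖x‖ ≠ 0 := by rw [hxa]; exact ha0.ne'
  set u : E := ‖x‖⁻¹ • x with hu
  have hu1 : ‖u‖ = 1 := by rw [hu, norm_smul, norm_inv, norm_norm, inv_mul_cancel₀ hx0]
  have hnorm : ∀ r : ℝ, 0 < r → ‖r • u‖ = r := fun r hr => by
    rw [norm_smul, hu1, mul_one, Real.norm_of_nonneg hr.le]
  have hproj : ∀ r : ℝ, 0 < r → ‖r • u‖⁻¹ • (r • u) = u := fun r hr => by
    rw [hnorm r hr, smul_smul, inv_mul_cancel₀ hr.ne', one_smul]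
  have hau : a • u = x := by rw [hu, ← hxa, smul_smul, mul_inv_cancel₀ hx0, one_smul]
  have hb0 : 0 < b := ht.trans_le hb.1
  by_cases hbΩ : b • u ∈ closure Ω
  · exact Or.inl ⟨b • u, ⟨hbΩ, hnorm b hb0⟩, hproj b hb0⟩
  · have hconn : IsPreconnected ((fun r : ℝ => r • u) '' Icc t s) :=
      isPreconnected_Icc.image _ (by fun_prop)
    obtain ⟨r, hr, hrf⟩ : ∃ r ∈ Icc t s, r • u ∈ frontier (closure Ω) := by
      by_contra! hno
      -- Otherwise the interior and the complement of `closure Ω` would disconnect the segment.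
      have hint : ∀ r ∈ Icc t s, r • u ∈ closure Ω → r • u ∈ interior (closure Ω) :=
        fun r hr h => by_contra fun hn => hno r hr ⟨subset_closure h, hn⟩
      obtain ⟨y, -, hy, hy'⟩ := hconn _ _ isOpen_interior
        (isClosed_closure (s := Ω)).isOpen_compl
        (by
          rintro _ ⟨r, hr, rfl⟩
          exact (em (r • u ∈ closure Ω)).imp_left (hint r hr))
        ⟨a • u, ⟨a, ha, rfl⟩, hint a ha (by rwa [hau])⟩ ⟨b • u, ⟨b, hb, rfl⟩, hbΩ⟩
      exact hy' (interior_subset hy)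
    have hr0 : 0 < r := ht.trans_le hr.1
    refine Or.inr ⟨r • u, ⟨frontier_closure_subset hrf, ?_⟩, hproj r hr0⟩
    exact ⟨hr.1.trans_eq (hnorm r hr0).symm, (hnorm r hr0).trans_le hr.2⟩

/-- the spherical-slice comparison inequality from the proof of Lemma B.1:
for `1 ≤ t < s ≤ 2`, the projected `(m-1)`-dimensional Hausdorff measures of the slices of
`cl(Ω)` at radii `s` and `t` differ by at most `ℋ^{m-1}(∂Ω ∩ {t ≤ ‖x‖ ≤ s})`
(the absolute-value inequality `|a - b| ≤ e` is expressed as `a ≤ b + e ∧ b ≤ a + e`). -/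
theorem projected_slice_area_comparison (m : ℕ) (hm : 2 ≤ m)
    (Ω : Set (EuclideanSpace ℝ (Fin m))) (t s : ℝ) (ht : 1 ≤ t) (hts : t < s) (hs : s ≤ 2) :
    μH[(m : ℝ) - 1] ((fun x : EuclideanSpace ℝ (Fin m) => ‖x‖⁻¹ • x) ''
          (closure Ω ∩ {x : EuclideanSpace ℝ (Fin m) | ‖x‖ = s}))
        ≤ μH[(m : ℝ) - 1] ((fun x : EuclideanSpace ℝ (Fin m) => ‖x‖⁻¹ • x) ''
            (closure Ω ∩ {x : EuclideanSpace ℝ (Fin m) | ‖x‖ = t}))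
          + μH[(m : ℝ) - 1] (frontier Ω ∩ {x : EuclideanSpace ℝ (Fin m) | t ≤ ‖x‖ ∧ ‖x‖ ≤ s}) ∧
    μH[(m : ℝ) - 1] ((fun x : EuclideanSpace ℝ (Fin m) => ‖x‖⁻¹ • x) ''
          (closure Ω ∩ {x : EuclideanSpace ℝ (Fin m) | ‖x‖ = t}))
        ≤ μH[(m : ℝ) - 1] ((fun x : EuclideanSpace ℝ (Fin m) => ‖x‖⁻¹ • x) ''
            (closure Ω ∩ {x : EuclideanSpace ℝ (Fin m) | ‖x‖ = s}))
          + μH[(m : ℝ) - 1] (frontier Ω ∩ {x : EuclideanSpace ℝ (Fin m) | t ≤ ‖x‖ ∧ ‖x‖ ≤ s}) := by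
  have hd : (0 : ℝ) ≤ (m : ℝ) - 1 := by
    have : (2 : ℝ) ≤ m := by exact_mod_cast hm
    linarith
  have hfr : μH[(m : ℝ) - 1] ((fun x : EuclideanSpace ℝ (Fin m) => ‖x‖⁻¹ • x) ''
      (frontier Ω ∩ {x | t ≤ ‖x‖ ∧ ‖x‖ ≤ s})) ≤
      μH[(m : ℝ) - 1] (frontier Ω ∩ {x | t ≤ ‖x‖ ∧ ‖x‖ ≤ s}) := by
    have h := (lipschitzOnWith_radial.mono fun x hx => ht.trans hx.2.1 :
      LipschitzOnWith 1 (fun x : EuclideanSpace ℝ (Fin m) => ‖x‖⁻¹ • x)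
        (frontier Ω ∩ {x | t ≤ ‖x‖ ∧ ‖x‖ ≤ s})).hausdorffMeasure_image_le hd
    simpa using h
  have key : ∀ a ∈ Icc t s, ∀ b ∈ Icc t s, _ := fun a ha b hb =>
    (measure_mono (μ := μH[(m : ℝ) - 1])
      (radial_image_subset Ω (zero_lt_one.trans_le ht) ha hb)).trans
        ((measure_union_le _ _).trans (add_le_add_right hfr _))
  exact ⟨key s (right_mem_Icc.2 hts.le) t (left_mem_Icc.2 hts.le),
    key t (left_mem_Icc.2 hts.le) s (right_mem_Icc.2 hts.le)⟩
end

section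
/- Let (X, d) be a metric space in which every open metric ball is connected, let μ be a Borel measure on X, let m ≥ 1 be an integer and κ > 0. Let B ⊆ X be an open set with nonempty frontier ∂B and with μ(B) < κ, and assume μ(B(x, r)) ≥ κ·r^m for every x ∈ B and every r ∈ (0, 1]. Then diam(B) ≤ diam(∂B) + 2·(μ(B)/κ)^{1/m}, where diam denotes the diameter with respect to the ambient metric d. -/
/-!
Put `v = (μ(B)/κ)^{1/m}`, so `v < 1`. For `x ∈ B` and `v < r ≤ 1`, noncollapsing gives
`μ(B) < κ r^m ≤ μ(ball x r)`, so the ball is not contained in `B`. It is connected and meets both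
`B` and its complement, hence it meets the frontier of `B` (`exists_frontier_dist_lt`). Every point
of `B` is therefore within `r` of the frontier; the triangle inequality bounds the diameter of `B`
by `diam(∂B) + 2r`, and `r` may be taken down to `v`.
-/

open MeasureTheory Metric Set

theorem exists_frontier_dist_lt {X : Type*} [MetricSpace X] [MeasurableSpace X]
    (μ : Measure X) {m : ℕ} (hm : 1 ≤ m) {κ : ℝ} (hκ : 0 < κ) {B : Set X}
    (hB : μ B < ENNReal.ofReal κ) {x : X} (hx : x ∈ B) {r : ℝ}
    (hr : ((μ B).toReal / κ) ^ (1 / (m : ℝ)) < r)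
    (hconn : IsConnected (ball x r))
    (hnc : ENNReal.ofReal (κ * r ^ m) ≤ μ (ball x r)) :
    ∃ p ∈ frontier B, dist p x < r := by
  have hq : 0 ≤ (μ B).toReal / κ := by positivity
  have hr0 : 0 < r := (Real.rpow_nonneg hq _).trans_lt hr
  have hpow : (μ B).toReal / κ < r ^ m := by
    rw [one_div] at hr
    calc (μ B).toReal / κ = (((μ B).toReal / κ) ^ ((m : ℝ)⁻¹)) ^ m :=
          (Real.rpow_inv_natCast_pow hq (by omega)).symm
      _ < r ^ m := pow_lt_pow_left₀ hr (Real.rpow_nonneg hq _) (by omega)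
  have hlt : μ B < μ (ball x r) := by
    refine lt_of_lt_of_le ?_ hnc
    rw [ENNReal.lt_ofReal_iff_toReal_lt hB.ne_top]
    rwa [div_lt_iff₀' hκ] at hpow
  have hns : ¬ ball x r ⊆ B := fun h => (measure_mono h).not_gt hlt
  obtain ⟨z, hz, hzB⟩ := not_subset.1 hns
  by_contra! hno
  -- A ball missing the frontier would be separated by the interiors of `B` and its complement.
  have hdisj : ∀ p ∈ ball x r, p ∉ frontier B :=
    fun p hp hpB => (hno p hpB).not_gt (mem_ball.1 hp)
  have hxi : x ∈ interior B := by
    by_contra h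
    exact hdisj x (mem_ball_self hr0) ⟨subset_closure hx, h⟩
  have hzi : z ∈ interior Bᶜ := by
    rw [interior_compl]
    exact fun h => hdisj z hz ⟨h, fun h' => hzB (interior_subset h')⟩
  have hcover : ball x r ⊆ interior B ∪ interior Bᶜ := by
    intro p hp
    by_cases h : p ∈ interior B
    · exact Or.inl h
    · rw [interior_compl]
      exact Or.inr fun h' => hdisj p hp ⟨h', h⟩
  obtain ⟨w, -, hw, hw'⟩ := hconn.isPreconnected _ _ isOpen_interior isOpen_interior hcover
    ⟨x, mem_ball_self hr0, hxi⟩ ⟨z, hz, hzi⟩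
  exact interior_subset hw' (interior_subset hw)

/-- connected-boundary case of Lemma A.1: on a metric space in which every
open ball (of positive radius) is connected, with a Borel measure which is `κ`-noncollapsed at
scale 1 at every point of `B`, every open set `B` with nonempty frontier and `μ(B) < κ`
satisfies `diam(B) ≤ diam(∂B) + 2·(μ(B)/κ)^{1/m}` (diameters in the ambient metric). -/
theorem diam_le_diam_frontier_of_noncollapsed
    {X : Type*} [MetricSpace X] [MeasurableSpace X] [BorelSpace X]
    (hball : ∀ (q : X) (r : ℝ), 0 < r → IsConnected (ball q r))
    (μ : Measure X) (m : ℕ) (hm : 1 ≤ m) (κ : ℝ) (hκ : 0 < κ)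
    (B : Set X) (hBopen : IsOpen B) (hfr : (frontier B).Nonempty)
    (hB : μ B < ENNReal.ofReal κ)
    (hnc : ∀ x ∈ B, ∀ r : ℝ, 0 < r → r ≤ 1 → ENNReal.ofReal (κ * r ^ m) ≤ μ (ball x r)) :
    EMetric.diam B ≤ EMetric.diam (frontier B)
      + ENNReal.ofReal (2 * ((μ B).toReal / κ) ^ (1 / (m : ℝ))) := by
  set v : ℝ := ((μ B).toReal / κ) ^ (1 / (m : ℝ)) with hv
  have hq : 0 ≤ (μ B).toReal / κ := by positivity
  have hv0 : 0 ≤ v := Real.rpow_nonneg hq _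
  have hv1 : v < 1 := by
    refine Real.rpow_lt_one hq ?_ (by positivity)
    rw [div_lt_one hκ]
    exact (ENNReal.lt_ofReal_iff_toReal_lt hB.ne_top).1 hB
  refine Metric.ediam_le fun x hx y hy => ?_
  have key : ∀ r ∈ Ioo v 1,
      edist x y ≤ Metric.ediam (frontier B) + ENNReal.ofReal (2 * r) := by
    intro r hr
    have hr0 : 0 < r := hv0.trans_lt hr.1
    obtain ⟨p, hp, hxp⟩ := exists_frontier_dist_lt μ hm hκ hB hx hr.1 (hball x r hr0)
      (hnc x hx r hr0 hr.2.le)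
    obtain ⟨q, hq, hyq⟩ := exists_frontier_dist_lt μ hm hκ hB hy hr.1 (hball y r hr0)
      (hnc y hy r hr0 hr.2.le)
    have hpq : edist p q ≤ Metric.ediam (frontier B) := Metric.edist_le_ediam_of_mem hp hq
    have h1 : edist x p ≤ ENNReal.ofReal r := by
      rw [edist_comm, edist_dist]; exact ENNReal.ofReal_le_ofReal hxp.le
    have h2 : edist q y ≤ ENNReal.ofReal r := by
      rw [edist_dist]; exact ENNReal.ofReal_le_ofReal hyq.le
    calc edist x y ≤ edist x p + edist p q + edist q y := edist_triangle4 x p q y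
      _ ≤ ENNReal.ofReal r + Metric.ediam (frontier B) + ENNReal.ofReal r := by gcongr
      _ = Metric.ediam (frontier B) + ENNReal.ofReal (2 * r) := by
        rw [two_mul, ENNReal.ofReal_add hr0.le hr0.le]; ring
  have hlim : Filter.Tendsto (fun r : ℝ => Metric.ediam (frontier B) + ENNReal.ofReal (2 * r))
      (nhdsWithin v (Ioi v)) (nhds (Metric.ediam (frontier B) + ENNReal.ofReal (2 * v))) := by
    refine tendsto_const_nhds.add (ENNReal.tendsto_ofReal ?_)
    exact (Continuous.tendsto (by fun_prop) v).mono_left nhdsWithin_le_nhds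
  exact ge_of_tendsto hlim (Filter.eventually_of_mem (Ioo_mem_nhdsGT hv1) key)
end

section
/- Let X be a nonempty compact topological space and let u : X × [−1, 0] → ℝ be a continuous nonnegative function. Suppose there is a point (x₀, t₀) with x₀ ∈ X, t₀ ∈ [−1/4, 0], and u(x₀, t₀) ≥ 400. Then there exists a point (y, s) with y ∈ X and s ∈ [−1/2, 0] such that: (1) u(y, s) ≥ u(x₀, t₀); (2) the interval [s − u(y, s)^{−1/2}, s] is contained in [−1/2, 0]; and (3) u(x, t) ≤ 2·u(y, s) for every x ∈ X and every t ∈ [s − u(y, s)^{−1/2}, s]. -/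
/-!
The doubling iteration is replaced by one near-extremal choice. Call a spacetime point `(y, s)`
admissible if `s ≤ 0`, `u (x₀, t₀) ≤ u (y, s)` and `-1/2 ≤ s - 4 * u (y, s) ^ (-1/2)`; the last
condition reserves enough time for the whole geometric series of later displacements. The point
`(x₀, t₀)` is admissible, since `4 * 400 ^ (-1/2) = 1/5`. If `(x, t)` satisfies
`s - u (y, s) ^ (-1/2) ≤ t ≤ s` and `u (x, t) > 2 * u (y, s)`, then it is admissible again, because
`1 + 4 / √2 ≤ 4` (`four_mul_rpow_le_of_two_mul_le`). Since `u` is bounded by compactness, some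
admissible point has a value greater than half the supremum over admissible points, and no
admissible point can more than double it.
-/

open Set

/-- The numerical step behind the doubling: it encodes `4 / √2 ≤ 3`, so that one displacement
`v ^ (-1/2)` together with the reserve `4 * w ^ (-1/2)` fits into the reserve `4 * v ^ (-1/2)`. -/
lemma four_mul_rpow_le_of_two_mul_le {v w : ℝ} (hv : 0 < v) (h : 2 * v ≤ w) :
    4 * w ^ (-(1 : ℝ)/2) ≤ 3 * v ^ (-(1 : ℝ)/2) := by
  have hw : 0 < w := by linarith
  have key : ∀ a : ℝ, 0 < a → a ^ (-(1 : ℝ)/2) = (√a)⁻¹ := fun a ha => by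
    rw [Real.sqrt_eq_rpow, ← Real.rpow_neg ha.le]
    norm_num
  rw [key v hv, key w hw, ← div_eq_mul_inv, ← div_eq_mul_inv,
    div_le_div_iff₀ (Real.sqrt_pos.2 hw) (Real.sqrt_pos.2 hv)]
  have h1 := Real.sq_sqrt hv.le
  have h2 := Real.sq_sqrt hw.le
  refine (pow_le_pow_iff_left₀ (by positivity) (by positivity) two_ne_zero).1 ?_
  nlinarith

lemma rpow_le_of_four_hundred_le {v : ℝ} (h : 400 ≤ v) : v ^ (-(1 : ℝ)/2) ≤ 1 / 20 := by
  calc v ^ (-(1 : ℝ)/2) ≤ (400 : ℝ) ^ (-(1 : ℝ)/2) :=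
        Real.rpow_le_rpow_of_nonpos (by norm_num) h (by norm_num)
    _ = 1 / 20 := by
        rw [show (400 : ℝ) = 20 ^ (2 : ℝ) by norm_num, ← Real.rpow_mul (by norm_num)]
        norm_num [Real.rpow_neg_one]

/-- abstract point-selection / doubling claim from Theorem 3.1: for a
continuous nonnegative function `u` on the compact spacetime `X × [-1,0]`, any point
`(x₀,t₀)` with `t₀ ∈ [-1/4,0]` and `u(x₀,t₀) ≥ 400` yields a point `(y,s)` with
`s ∈ [-1/2,0]`, `u(y,s) ≥ u(x₀,t₀)`, `[s - u(y,s)^{-1/2}, s] ⊆ [-1/2,0]`, and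
`u(x,t) ≤ 2·u(y,s)` for all `x ∈ X` and `t ∈ [s - u(y,s)^{-1/2}, s]`. -/
theorem point_selection_doubling
    {X : Type*} [TopologicalSpace X] [CompactSpace X] [Nonempty X]
    (u : X × ℝ → ℝ)
    (hu : ContinuousOn u (univ ×ˢ Icc (-1 : ℝ) 0))
    (hnonneg : ∀ x : X, ∀ t ∈ Icc (-1 : ℝ) 0, 0 ≤ u (x, t))
    (x₀ : X) (t₀ : ℝ) (ht₀ : t₀ ∈ Icc (-(1 : ℝ)/4) 0) (hlarge : 400 ≤ u (x₀, t₀)) :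
    ∃ (y : X) (s : ℝ), s ∈ Icc (-(1 : ℝ)/2) 0 ∧
      u (x₀, t₀) ≤ u (y, s) ∧
      Icc (s - u (y, s) ^ (-(1 : ℝ)/2)) s ⊆ Icc (-(1 : ℝ)/2) 0 ∧
      ∀ x : X, ∀ t ∈ Icc (s - u (y, s) ^ (-(1 : ℝ)/2)) s, u (x, t) ≤ 2 * u (y, s) := by
  let r : ℝ → ℝ := fun v => v ^ (-(1 : ℝ)/2)
  have hr : ∀ v, 0 < v → 0 < r v := fun v hv => Real.rpow_pos_of_pos hv _
  -- The admissible points.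
  let K : Set (X × ℝ) := {p | p.2 ≤ 0 ∧ u (x₀, t₀) ≤ u p ∧ -(1 : ℝ)/2 ≤ p.2 - 4 * r (u p)}
  have hK0 : (x₀, t₀) ∈ K := by
    refine ⟨ht₀.2, le_rfl, ?_⟩
    have := rpow_le_of_four_hundred_le hlarge
    have := ht₀.1
    simp only [r]
    linarith
  have hbdd : BddAbove (u '' K) := by
    refine ((isCompact_univ.prod isCompact_Icc).bddAbove_image hu).mono (image_mono ?_)
    rintro ⟨x, t⟩ ⟨h1, h2, h3⟩
    have := hr (u (x, t)) (by linarith)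
    dsimp only at h1 h3
    exact ⟨mem_univ _, by dsimp only; linarith, h1⟩
  have hle : ∀ p ∈ K, u p ≤ sSup (u '' K) := fun p hp => le_csSup hbdd (mem_image_of_mem u hp)
  have hhalf : sSup (u '' K) / 2 < sSup (u '' K) := by
    have := hle _ hK0
    linarith
  obtain ⟨_, ⟨⟨y, s⟩, ⟨hs, hu0, hres⟩, rfl⟩, hlt⟩ :=
    exists_lt_of_lt_csSup ⟨_, mem_image_of_mem u hK0⟩ hhalf
  dsimp only at hs hres
  have hpos : 0 < u (y, s) := by linarith
  have hrpos := hr _ hpos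
  refine ⟨y, s, ⟨by linarith, hs⟩, hu0, Icc_subset_Icc (by change _ ≤ s - r _; linarith) hs, ?_⟩
  rintro x t ⟨ht1, ht2⟩
  change s - r (u (y, s)) ≤ t at ht1
  by_contra! hbig
  have hstep : 4 * r (u (x, t)) ≤ 3 * r (u (y, s)) :=
    four_mul_rpow_le_of_two_mul_le hpos hbig.le
  have hmem : (x, t) ∈ K :=
    ⟨ht2.trans hs, by linarith, by dsimp only; linarith⟩
  have := hle _ hmem
  linarith
end

section
/- Let S be a nonempty set, let c be a real number, and let F : S × ℝ × ℝ → ℝ be a function. Assume: (i) there exists a triple (x₀, t₀, r₀) with x₀ ∈ S, t₀ ∈ [−1/4, 0], r₀ ∈ (0, 1], and F(x₀, t₀, r₀) > c; (ii) there exists r* > 0 such that F(z, θ, r) ≤ c for every z ∈ S, θ ∈ [−1/2, 0], and 0 < r ≤ r*. Then there exists a triple (y, s, ρ) with y ∈ S, ρ ∈ (0, 1], such that: (1) the interval [s − ρ²/4, s] is contained in [−1/2, 0]; (2) F(y, s, ρ) > c; and (3) F(z, θ, r) ≤ c for every z ∈ S, every θ ∈ [s − ρ²/8, s], and every 0 <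 r ≤ ρ/2. -/
open Set

/-!
If a bad triple `(y, s, ρ)` does not satisfy the conclusion, there is a bad triple `(z, θ, r)`
with `r ≤ ρ / 2` and `s - ρ² / 8 ≤ θ ≤ s`. Replacing the former by the latter does not decrease
`s - ρ² / 6`, because `ρ² / 8 + (ρ / 2)² / 6 = ρ² / 6`; this monotone quantity takes the place of
summing the geometric series of time displacements. It starts at no less than
`-1/4 - 1/6 = -5/12`, which keeps `s - ρ² / 4 ≥ -5/12 - 1/12 = -1/2` at every step. The scale at
least halves each time, so the process stops before reaching the scales at which every triple is
good: `exists_selected_of_le_two_pow_mul` is the induction on the number of halvings.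
-/

/-- Induction on the number `n` of halvings that bring the scale `ρ` down to `rstar`. The
hypothesis `-5/12 ≤ s - ρ² / 6` is the invariant that confines the selected times. -/
theorem exists_selected_of_le_two_pow_mul {S : Type*} (c : ℝ) (F : S → ℝ → ℝ → ℝ) (rstar : ℝ)
    (hsmall : ∀ (z : S) (θ r : ℝ), θ ∈ Icc (-(1 : ℝ)/2) 0 → 0 < r → r ≤ rstar → F z θ r ≤ c)
    (n : ℕ) : ∀ (y : S) (s ρ : ℝ), 0 < ρ → ρ ≤ 1 → s ≤ 0 → -(5 : ℝ)/12 ≤ s - ρ ^ 2 / 6 →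
      ρ ≤ 2 ^ n * rstar → c < F y s ρ →
    ∃ (y : S) (s ρ : ℝ), ρ ∈ Ioc (0 : ℝ) 1 ∧
      Icc (s - ρ ^ 2 / 4) s ⊆ Icc (-(1 : ℝ)/2) 0 ∧
      c < F y s ρ ∧
      ∀ (z : S) (θ r : ℝ), θ ∈ Icc (s - ρ ^ 2 / 8) s → 0 < r → r ≤ ρ / 2 →
        F z θ r ≤ c := by
  induction n with
  | zero =>
    intro y s ρ hρ hρ1 hs hinv hle hF
    have hgood := hsmall y s ρ ⟨by nlinarith, hs⟩ hρ (by simpa using hle)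
    exact absurd hF hgood.not_gt
  | succ n ih =>
    intro y s ρ hρ hρ1 hs hinv hle hF
    by_cases hgood : ∀ (z : S) (θ r : ℝ), θ ∈ Icc (s - ρ ^ 2 / 8) s → 0 < r → r ≤ ρ / 2 →
        F z θ r ≤ c
    · refine ⟨y, s, ρ, ⟨hρ, hρ1⟩, Icc_subset_Icc ?_ hs, hF, hgood⟩
      nlinarith
    · push Not at hgood
      obtain ⟨z, θ, r, ⟨hθ, hθs⟩, hr, hrρ, hFz⟩ := hgood
      have hsq : r ^ 2 ≤ (ρ / 2) ^ 2 := by gcongr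
      refine ih z θ r hr (by linarith) (by linarith) (by linarith) ?_ hFz
      rw [pow_succ] at hle
      linarith

/-- abstract scale-and-time selection claim from Proposition 3.10:
given `F : S × ℝ × ℝ → ℝ` with a 'bad' triple `(x₀,t₀,r₀)` (`t₀ ∈ [-1/4,0]`,
`r₀ ∈ (0,1]`, `F(x₀,t₀,r₀) > c`) and such that all triples at sufficiently small scales
`r ≤ r*` with times in `[-1/2,0]` are 'good' (`F ≤ c`), there exists a bad triple
`(y,s,ρ)` with `ρ ∈ (0,1]`, `[s - ρ²/4, s] ⊆ [-1/2,0]`, `F(y,s,ρ) > c`, below which all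
triples at scales `≤ ρ/2` and times in `[s - ρ²/8, s]` are good. -/
theorem scale_and_time_selection
    {S : Type*} [Nonempty S] (c : ℝ) (F : S → ℝ → ℝ → ℝ)
    (hbad : ∃ (x₀ : S) (t₀ r₀ : ℝ), t₀ ∈ Icc (-(1 : ℝ)/4) 0 ∧ r₀ ∈ Ioc (0 : ℝ) 1 ∧
      c < F x₀ t₀ r₀)
    (hsmall : ∃ rstar : ℝ, 0 < rstar ∧ ∀ (z : S) (θ r : ℝ), θ ∈ Icc (-(1 : ℝ)/2) 0 →
      0 < r → r ≤ rstar → F z θ r ≤ c) :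
    ∃ (y : S) (s ρ : ℝ), ρ ∈ Ioc (0 : ℝ) 1 ∧
      Icc (s - ρ ^ 2 / 4) s ⊆ Icc (-(1 : ℝ)/2) 0 ∧
      c < F y s ρ ∧
      ∀ (z : S) (θ r : ℝ), θ ∈ Icc (s - ρ ^ 2 / 8) s → 0 < r → r ≤ ρ / 2 →
        F z θ r ≤ c := by
  obtain ⟨x₀, t₀, r₀, ⟨ht, ht0⟩, ⟨hr, hr1⟩, hF⟩ := hbad
  obtain ⟨rstar, hpos, hgood⟩ := hsmall
  obtain ⟨n, hn⟩ := pow_unbounded_of_one_lt (r₀ / rstar) (one_lt_two (α := ℝ))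
  refine exists_selected_of_le_two_pow_mul c F rstar hgood n x₀ t₀ r₀ hr hr1 ht0 ?_ ?_ hF
  · nlinarith
  · exact ((div_lt_iff₀ hpos).1 hn).le
end

section
/- Let (X, d) be a metric space in which every open metric ball is connected, let μ be a Borel measure on X, let m ≥ 1 be an integer, let κ > 0 and K > 0, let p ∈ X, and let 0 < δ ≤ 2. Assume μ(B(q, r)) ≥ κ·r^m for every q ∈ X and every r ∈ (0, 1], and assume μ(B(p, δ)) ≤ K·δ^m. Then the number of connected components of B(p, δ)∖{p} that contain a point at distance exactly δ/2 from p is at most 2^m·K/κ. -/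
open MeasureTheory Metric Set

/-!
If `dist q p = δ / 2`, then `ball q (δ / 2)` is a connected subset of `ball p δ \ {p}`, so it lies
in the component of `q`. Balls chosen in distinct components are therefore disjoint, each has
measure at least `κ * (δ / 2) ^ m`, and together they fit into `ball p δ`, of measure at most
`K * δ ^ m`. This bounds the size of every finite family of such components, which yields both
the finiteness and the cardinality bound.
-/

/-- bound on the number of cone-like ends, from the proof of Lemma 3.5:
on a metric space with connected balls and a Borel measure which is `κ`-noncollapsed at
scale 1 at every point, if `0 < δ ≤ 2` and `μ(B(p,δ)) ≤ K·δ^m`, then the number of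
connected components of `B(p,δ) \ {p}` containing a point at distance exactly `δ/2` from
`p` is finite and at most `2^m·K/κ`. -/
theorem card_components_le_of_noncollapsed
    {X : Type*} [MetricSpace X] [MeasurableSpace X] [BorelSpace X]
    (hball : ∀ (q : X) (r : ℝ), 0 < r → IsConnected (ball q r))
    (μ : Measure X) (m : ℕ) (hm : 1 ≤ m) (κ K : ℝ) (hκ : 0 < κ) (hK : 0 < K)
    (p : X) (δ : ℝ) (hδ : 0 < δ) (hδ2 : δ ≤ 2)
    (hnc : ∀ (q : X) (r : ℝ), 0 < r → r ≤ 1 → ENNReal.ofReal (κ * r ^ m) ≤ μ (ball q r))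
    (hupper : μ (ball p δ) ≤ ENNReal.ofReal (K * δ ^ m)) :
    ({C : Set X | ∃ q : X, dist q p = δ / 2 ∧
        C = connectedComponentIn (ball p δ \ {p}) q}).Finite ∧
      (Nat.card {C : Set X | ∃ q : X, dist q p = δ / 2 ∧
          C = connectedComponentIn (ball p δ \ {p}) q} : ℝ) ≤ 2 ^ m * K / κ := by
  set S : Set (Set X) := {C : Set X | ∃ q : X, dist q p = δ / 2 ∧
        C = connectedComponentIn (ball p δ \ {p}) q} with hS
  have hsub : ∀ q : X, dist q p = δ / 2 → ball q (δ / 2) ⊆ ball p δ \ {p} := by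
    intro q hq x hx
    rw [mem_ball] at hx
    refine ⟨?_, ?_⟩
    · rw [mem_ball]
      linarith [dist_triangle x q p]
    · rintro rfl
      rw [dist_comm, hq] at hx
      exact lt_irrefl _ hx
  have hcomp : ∀ q : X, dist q p = δ / 2 →
      ball q (δ / 2) ⊆ connectedComponentIn (ball p δ \ {p}) q := fun q hq =>
    (hball q (δ / 2) (half_pos hδ)).isPreconnected.subset_connectedComponentIn
      (mem_ball_self (half_pos hδ)) (hsub q hq)
  have key : ∀ t : Finset (Set X), (t : Set (Set X)) ⊆ S →
      (t.card : ℝ) ≤ 2 ^ m * K / κ := by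
    intro t ht
    have hc : ∀ C : Set X, ∃ q : X, C ∈ t → dist q p = δ / 2 ∧
        C = connectedComponentIn (ball p δ \ {p}) q := by
      intro C
      by_cases h : C ∈ t
      · obtain ⟨q, hq⟩ := ht h
        exact ⟨q, fun _ => hq⟩
      · exact ⟨p, fun h' => absurd h' h⟩
    choose f hf using hc
    have hdisj : (t : Set (Set X)).PairwiseDisjoint (fun C => ball (f C) (δ / 2)) := by
      intro C hC D hD hne
      refine Set.disjoint_left.2 fun x hx hy => hne ?_
      obtain ⟨hC1, hC2⟩ := hf C hC
      obtain ⟨hD1, hD2⟩ := hf D hD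
      rw [hC2, hD2, connectedComponentIn_eq (hcomp _ hC1 hx),
        connectedComponentIn_eq (hcomp _ hD1 hy)]
    have hmeas : (t.card : ENNReal) * ENNReal.ofReal (κ * (δ / 2) ^ m) ≤
        ENNReal.ofReal (K * δ ^ m) := by
      calc (t.card : ENNReal) * ENNReal.ofReal (κ * (δ / 2) ^ m)
          = ∑ _C ∈ t, ENNReal.ofReal (κ * (δ / 2) ^ m) := by
            rw [Finset.sum_const, nsmul_eq_mul]
        _ ≤ ∑ C ∈ t, μ (ball (f C) (δ / 2)) :=
            Finset.sum_le_sum fun C _ => hnc _ _ (half_pos hδ) (by linarith)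
        _ = μ (⋃ C ∈ t, ball (f C) (δ / 2)) :=
            (measure_biUnion_finset hdisj fun _ _ => measurableSet_ball).symm
        _ ≤ μ (ball p δ) := measure_mono <| Set.iUnion₂_subset fun C hC =>
            (hsub _ (hf C hC).1).trans Set.sdiff_subset
        _ ≤ ENNReal.ofReal (K * δ ^ m) := hupper
    rw [← ENNReal.ofReal_natCast, ← ENNReal.ofReal_mul (Nat.cast_nonneg _),
      ENNReal.ofReal_le_ofReal_iff (by positivity), div_pow] at hmeas
    have hδm : 0 < δ ^ m := pow_pos hδ m
    rw [le_div_iff₀ hκ]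
    refine le_of_mul_le_mul_right ?_ hδm
    calc (t.card : ℝ) * κ * δ ^ m = 2 ^ m * (t.card * (κ * (δ ^ m / 2 ^ m))) := by
          field_simp
      _ ≤ 2 ^ m * (K * δ ^ m) := by gcongr
      _ = 2 ^ m * K * δ ^ m := by ring
  have hfin : S.Finite := by
    by_contra hinf
    obtain ⟨n, hn⟩ := exists_nat_gt (2 ^ m * K / κ)
    obtain ⟨t, ht, hcard⟩ := Set.Infinite.exists_subset_card_eq hinf n
    have := key t ht
    rw [hcard] at this
    linarith
  refine ⟨hfin, ?_⟩
  have h := key hfin.toFinset (by simp)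
  rwa [← Nat.card_eq_card_finite_toFinset hfin] at h
end
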